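/- Let Φ be a quantum channel on 3×3 complex matrices whose Choi matrix C(Φ) has diagonal (0, a, 1−a, b, 0, 1−b, c, 1−c, 0) for some a, b, c ∈ (0,1); equivalently, the diagonal of Φ(E_00) is (0, a, 1−a), the diagonal of Φ(E_11) is (b, 0, 1−b), and the diagonal of Φ(E_22) is (c, 1−c, 0). Then for every λ ∈ (0,1) and all orthogonal unit vectors x, x⊥ ∈ ℂ³, the map Φ ∘ Ψ_{λ,x,x⊥}^{-1} is not completely positive. -/

import Mathlib

open Matrix Kronecker
open scoped ComplexOrder

noncomputable section

/-- The linear map `ρ ↦ A ρ Bᴴ`. -/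
def sandwich₂ {m n : ℕ} (A B : Matrix (Fin m) (Fin n) ℂ) :
    Matrix (Fin n) (Fin n) ℂ →ₗ[ℂ] Matrix (Fin m) (Fin m) ℂ where
  toFun ρ := A * ρ * Bᴴ
  map_add' X Y := by simp [Matrix.mul_add, Matrix.add_mul]
  map_smul' c X := by simp [Matrix.mul_smul, Matrix.smul_mul]

/-- The linear map `ρ ↦ A ρ Aᴴ`. -/
def sandwich {m n : ℕ} (A : Matrix (Fin m) (Fin n) ℂ) :
    Matrix (Fin n) (Fin n) ℂ →ₗ[ℂ] Matrix (Fin m) (Fin m) ℂ :=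
  sandwich₂ A A

/-- The Choi matrix `C(Φ) = ∑ⱼₖ Eⱼₖ ⊗ Φ(Eⱼₖ)`. -/
def Choi {n m : ℕ} (Φ : Matrix (Fin n) (Fin n) ℂ →ₗ[ℂ] Matrix (Fin m) (Fin m) ℂ) :
    Matrix (Fin n × Fin m) (Fin n × Fin m) ℂ :=
  ∑ j : Fin n, ∑ k : Fin n,
    (Matrix.single j k (1 : ℂ)) ⊗ₖ Φ (Matrix.single j k (1 : ℂ))

/-- Vectorization: `vec X = ∑ⱼ eⱼ ⊗ X eⱼ`, i.e. `(vec X) (j, i) = X i j`. -/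
def vec {m n : ℕ} (X : Matrix (Fin m) (Fin n) ℂ) : Fin n × Fin m → ℂ :=
  fun p => X p.2 p.1

/-- Complete positivity (via the Choi characterization). -/
def IsCP {n : ℕ} (Φ : Matrix (Fin n) (Fin n) ℂ →ₗ[ℂ] Matrix (Fin n) (Fin n) ℂ) : Prop :=
  (Choi Φ).PosSemidef

/-- Trace preservation. -/
def IsTP {n : ℕ} (Φ : Matrix (Fin n) (Fin n) ℂ →ₗ[ℂ] Matrix (Fin n) (Fin n) ℂ) : Prop :=
  ∀ ρ, (Φ ρ).trace = ρ.trace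

/-- Quantum channel: completely positive and trace preserving. -/
def IsChannel {n : ℕ} (Φ : Matrix (Fin n) (Fin n) ℂ →ₗ[ℂ] Matrix (Fin n) (Fin n) ℂ) : Prop :=
  IsCP Φ ∧ IsTP Φ

/-- `K_λ = 1 - (1 - √(1-λ)) x x†`. -/
def Kmat {n : ℕ} (lam : ℝ) (x : Fin n → ℂ) : Matrix (Fin n) (Fin n) ℂ :=
  1 - ((1 - Real.sqrt (1 - lam) : ℝ) : ℂ) • Matrix.vecMulVec x (star x)

/-- `L_λ = √λ y x†`. -/
def Lmat {n : ℕ} (lam : ℝ) (x y : Fin n → ℂ) : Matrix (Fin n) (Fin n) ℂ :=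
  ((Real.sqrt lam : ℝ) : ℂ) • Matrix.vecMulVec y (star x)

/-- The elementary channel `Ψ_{λ,x,y} = K_λ (·) K_λ† + L_λ (·) L_λ†`. -/
def Psi {n : ℕ} (lam : ℝ) (x y : Fin n → ℂ) :
    Matrix (Fin n) (Fin n) ℂ →ₗ[ℂ] Matrix (Fin n) (Fin n) ℂ :=
  sandwich (Kmat lam x) + sandwich (Lmat lam x y)

/-- For `λ ∈ [0,1)` and `⟨x,y⟩ = 0`, the inverse of `Ψ_{λ,x,y}`:
`Ψ_{λ,x,y}⁻¹ = K_λ⁻¹ (·) K_λ⁻¹ - (1-λ)⁻¹ L_λ (·) L_λ†`. -/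
def PsiInv {n : ℕ} (lam : ℝ) (x y : Fin n → ℂ) :
    Matrix (Fin n) (Fin n) ℂ →ₗ[ℂ] Matrix (Fin n) (Fin n) ℂ :=
  sandwich (Kmat lam x)⁻¹ - (((1 - lam)⁻¹ : ℝ) : ℂ) • sandwich (Lmat lam x y)

/-- `Φ` is conjugation by a unitary. -/
def IsUnitaryConj {n : ℕ} (Φ : Matrix (Fin n) (Fin n) ℂ →ₗ[ℂ] Matrix (Fin n) (Fin n) ℂ) : Prop :=
  ∃ U ∈ Matrix.unitaryGroup (Fin n) ℂ, ∀ ρ, Φ ρ = U * ρ * Uᴴ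

/-- A quantum channel is divisible if it factors into two channels neither of which is
a unitary conjugation. -/
def Divisible {n : ℕ} (Φ : Matrix (Fin n) (Fin n) ℂ →ₗ[ℂ] Matrix (Fin n) (Fin n) ℂ) : Prop :=
  ∃ Φ₁ Φ₂ : Matrix (Fin n) (Fin n) ℂ →ₗ[ℂ] Matrix (Fin n) (Fin n) ℂ,
    IsChannel Φ₁ ∧ IsChannel Φ₂ ∧ Φ = Φ₁ ∘ₗ Φ₂ ∧ ¬ IsUnitaryConj Φ₁ ∧ ¬ IsUnitaryConj Φ₂

/-- `Z = conj(x) conj(x⊥)† ⊗ 1`. -/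
def Zmat {n : ℕ} (x xp : Fin n → ℂ) : Matrix (Fin n × Fin n) (Fin n × Fin n) ℂ :=
  (Matrix.vecMulVec (star x) xp) ⊗ₖ (1 : Matrix (Fin n) (Fin n) ℂ)

/-!
For the effects `Mᵢ = Φ*(Eᵢᵢ)` one has `Φ(v v†)ᵢᵢ = v† Mᵢ v`. Since
`Ψ⁻¹(K w (K w)†) = w w† - λ |⟨x, w⟩|² x⊥ x⊥†`, complete positivity of `Φ ∘ Ψ⁻¹` forces, for every
`w ∈ ker Mᵢ`, that `w ⊥ x` or `x⊥ ∈ ker Mᵢ`. If `ker Mᵢ = ℂ eᵢ` for all `i`, choose `i` with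
`xᵢ ≠ 0`: then `x⊥ ∈ ℂ eᵢ` cannot be orthogonal to `x`. For the channels of the theorem each `Mᵢ` is
diagonal with `i`-th diagonal entry as its only zero: positivity kills row and column `i` of `Mᵢ`,
and `M₀ + M₁ + M₂ = 1` kills the remaining off-diagonal entries.
-/

section Effects

variable {n m : ℕ}

lemma Choi_apply (Φ : Matrix (Fin n) (Fin n) ℂ →ₗ[ℂ] Matrix (Fin m) (Fin m) ℂ)
    (j k : Fin n) (l r : Fin m) : Choi Φ (j, l) (k, r) = Φ (single j k 1) l r := by
  simp [Choi, Matrix.sum_apply, single_apply, ite_and]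

/-- The effect `Mᵢ = Φ*(Eᵢᵢ)`, i.e. the matrix with `Φ(X)ᵢᵢ = tr (Mᵢ X)` for all `X`. -/
def effect (Φ : Matrix (Fin n) (Fin n) ℂ →ₗ[ℂ] Matrix (Fin m) (Fin m) ℂ) (i : Fin m) :
    Matrix (Fin n) (Fin n) ℂ :=
  of fun j k => Φ (single k j 1) i i

lemma map_apply_self_eq_trace_effect_mul
    (Φ : Matrix (Fin n) (Fin n) ℂ →ₗ[ℂ] Matrix (Fin m) (Fin m) ℂ)
    (X : Matrix (Fin n) (Fin n) ℂ) (i : Fin m) : Φ X i i = (effect Φ i * X).trace := by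
  induction X using Matrix.induction_on' with
  | h_zero => simp
  | h_add X Y hX hY => simp [mul_add, hX, hY]
  | h_std_basis j k z =>
    have hz : single j k z = z • single j k 1 := by rw [smul_single, smul_eq_mul, mul_one]
    rw [hz, map_smul, Matrix.smul_apply, Matrix.mul_smul, trace_smul, trace_mul_single]
    simp [effect]

lemma map_vecMulVec_apply_self
    (Φ : Matrix (Fin n) (Fin n) ℂ →ₗ[ℂ] Matrix (Fin m) (Fin m) ℂ)
    (v w : Fin n → ℂ) (i : Fin m) :
    Φ (vecMulVec v w) i i = w ⬝ᵥ effect Φ i *ᵥ v := by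
  rw [map_apply_self_eq_trace_effect_mul, mul_vecMulVec, trace_vecMulVec, dotProduct_comm]

variable {Φ : Matrix (Fin n) (Fin n) ℂ →ₗ[ℂ] Matrix (Fin n) (Fin n) ℂ}

lemma IsCP.posSemidef_effect (h : IsCP Φ) (i : Fin n) : (effect Φ i).PosSemidef := by
  have heffect : effect Φ i = ((Choi Φ).submatrix (·, i) (·, i))ᵀ := by
    ext j k
    exact (Choi_apply Φ k j i i).symm
  rw [heffect]
  exact (h.submatrix _).transpose

lemma IsCP.map_vecMulVec_apply_self_nonneg (h : IsCP Φ) (v : Fin n → ℂ) (i : Fin n) :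
    0 ≤ Φ (vecMulVec v (star v)) i i := by
  rw [map_vecMulVec_apply_self]
  exact (h.posSemidef_effect i).dotProduct_mulVec_nonneg v

lemma IsCP.map_vecMulVec_apply_self_eq_zero_iff (h : IsCP Φ) (v : Fin n → ℂ) (i : Fin n) :
    Φ (vecMulVec v (star v)) i i = 0 ↔ effect Φ i *ᵥ v = 0 := by
  rw [map_vecMulVec_apply_self, (h.posSemidef_effect i).dotProduct_mulVec_zero_iff]

lemma IsTP.sum_effect (h : IsTP Φ) : ∑ i, effect Φ i = 1 := by
  ext j k
  rw [Matrix.sum_apply]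
  refine (h (single k j 1)).trans ?_
  obtain rfl | hjk := eq_or_ne j k
  · simp
  · rw [trace_single_eq_of_ne _ _ _ hjk.symm, one_apply_ne hjk]

end Effects

section Kernels

lemma posSemidef_apply_eq_zero_of_apply_self_eq_zero {ι : Type*} {A : Matrix ι ι ℂ}
    (hA : A.PosSemidef) {i : ι} (hi : A i i = 0) (j : ι) :
    A i j = 0 ∧ A j i = 0 := by
  have hker : A.submatrix ![i, j] ![i, j] *ᵥ Pi.single 0 1 = 0 :=
    ((hA.submatrix ![i, j]).dotProduct_mulVec_zero_iff _).1 (by simp [-submatrix_cons_row, hi])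
  have hcol : A j i = 0 := by simpa [-submatrix_cons_row] using congrFun hker 1
  exact ⟨by rw [← hA.isHermitian.apply, hcol, star_zero], hcol⟩

lemma isDiag_mulVec_eq_zero_iff {ι R : Type*} [Fintype ι]
    [NonUnitalNonAssocSemiring R] [NoZeroDivisors R] {A : Matrix ι ι R} (hA : A.IsDiag)
    (v : ι → R) : A *ᵥ v = 0 ↔ ∀ j, A j j = 0 ∨ v j = 0 := by
  classical
  rw [← hA.diagonal_diag]
  simp [funext_iff, mulVec_diagonal]

variable {Φ : Matrix (Fin 3) (Fin 3) ℂ →ₗ[ℂ] Matrix (Fin 3) (Fin 3) ℂ}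

lemma IsChannel.isDiag_effect (h : IsChannel Φ) (hzero : ∀ i, effect Φ i i i = 0) (i : Fin 3) :
    (effect Φ i).IsDiag := by
  intro j k hjk
  have hj : effect Φ j j k = 0 :=
    (posSemidef_apply_eq_zero_of_apply_self_eq_zero (h.1.posSemidef_effect j) (hzero j) k).1
  have hk : effect Φ k j k = 0 :=
    (posSemidef_apply_eq_zero_of_apply_self_eq_zero (h.1.posSemidef_effect k) (hzero k) j).2
  by_cases hij : i = j
  · rw [hij, hj]
  by_cases hik : i = k
  · rw [hik, hk]
  have hother : ∀ l ≠ i, effect Φ l j k = 0 := by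
    intro l hl
    obtain rfl | rfl : l = j ∨ l = k := by omega
    exacts [hj, hk]
  calc effect Φ i j k = ∑ l, effect Φ l j k :=
        (Fintype.sum_eq_single i hother).symm
    _ = 0 := by rw [← Matrix.sum_apply, h.2.sum_effect, one_apply_ne hjk]

lemma IsChannel.map_vecMulVec_apply_self_eq_zero_iff (h : IsChannel Φ)
    (hdiag : ∀ i j, Φ (single j j 1) i i = 0 ↔ j = i) (i : Fin 3) (v : Fin 3 → ℂ) :
    Φ (vecMulVec v (star v)) i i = 0 ↔ ∀ j ≠ i, v j = 0 := by
  have heffect : ∀ i j, effect Φ i j j = 0 ↔ j = i := hdiag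
  rw [h.1.map_vecMulVec_apply_self_eq_zero_iff,
    isDiag_mulVec_eq_zero_iff (h.isDiag_effect (fun i => (heffect i i).2 rfl) i)]
  simp only [heffect, or_iff_not_imp_left, ne_eq]

end Kernels

section PsiInv

variable {n : ℕ} {lam : ℝ} {x : Fin n → ℂ}

lemma sandwich_vecMulVec {m : ℕ} (A : Matrix (Fin m) (Fin n) ℂ) (v : Fin n → ℂ) :
    sandwich A (vecMulVec v (star v)) = vecMulVec (A *ᵥ v) (star (A *ᵥ v)) := by
  change A * vecMulVec v (star v) * Aᴴ = _
  rw [mul_vecMulVec, vecMulVec_mul, star_mulVec]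

lemma det_Kmat (lam : ℝ) (hx : star x ⬝ᵥ x = 1) : (Kmat lam x).det = √(1 - lam) := by
  rw [Kmat, sub_eq_add_neg, ← neg_smul, ← smul_vecMulVec, vecMulVec_eq Unit,
    det_one_add_replicateCol_mul_replicateRow, dotProduct_smul, hx]
  simp

lemma star_dotProduct_Kmat_mulVec (lam : ℝ) (hx : star x ⬝ᵥ x = 1) (w : Fin n → ℂ) :
    star x ⬝ᵥ Kmat lam x *ᵥ w = √(1 - lam) * (star x ⬝ᵥ w) := by
  rw [Kmat, sub_mulVec, one_mulVec, smul_mulVec, vecMulVec_mulVec, op_smul_eq_smul,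
    dotProduct_sub, dotProduct_smul, dotProduct_smul, hx]
  push_cast
  simp only [smul_eq_mul]
  ring

lemma Kmat_inv_mulVec_Kmat_mulVec (hlam : lam < 1) (hx : star x ⬝ᵥ x = 1) (w : Fin n → ℂ) :
    (Kmat lam x)⁻¹ *ᵥ (Kmat lam x *ᵥ w) = w := by
  have hdet : (Kmat lam x).det ≠ 0 := by
    rw [det_Kmat lam hx]
    exact_mod_cast (Real.sqrt_pos.2 (sub_pos.2 hlam)).ne'
  rw [mulVec_mulVec, nonsing_inv_mul _ hdet.isUnit, one_mulVec]

lemma Lmat_mulVec_Kmat_mulVec (lam : ℝ) (hx : star x ⬝ᵥ x = 1) (y w : Fin n → ℂ) :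
    Lmat lam x y *ᵥ (Kmat lam x *ᵥ w) =
      ((√lam * √(1 - lam) : ℝ) * (star x ⬝ᵥ w)) • y := by
  rw [Lmat, smul_mulVec, vecMulVec_mulVec, op_smul_eq_smul, smul_smul,
    star_dotProduct_Kmat_mulVec lam hx, Complex.ofReal_mul, mul_assoc]

lemma vecMulVec_smul_star_smul (c : ℂ) (y : Fin n → ℂ) :
    vecMulVec (c • y) (star (c • y)) = (Complex.normSq c : ℂ) • vecMulVec y (star y) := by
  rw [star_smul, smul_vecMulVec, vecMulVec_smul, smul_smul, Complex.star_def, Complex.mul_conj]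

lemma PsiInv_vecMulVec_Kmat_mulVec (hlam : lam ∈ Set.Ico (0 : ℝ) 1) (hx : star x ⬝ᵥ x = 1)
    (y w : Fin n → ℂ) :
    PsiInv lam x y (vecMulVec (Kmat lam x *ᵥ w) (star (Kmat lam x *ᵥ w))) =
      vecMulVec w (star w) -
        ((lam * Complex.normSq (star x ⬝ᵥ w) : ℝ) : ℂ) • vecMulVec y (star y) := by
  have hlam' : 0 < 1 - lam := sub_pos.2 hlam.2
  have hcoeff : (1 - lam)⁻¹ * Complex.normSq ((√lam * √(1 - lam) : ℝ) * (star x ⬝ᵥ w)) =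
      lam * Complex.normSq (star x ⬝ᵥ w) := by
    rw [Complex.normSq_mul, Complex.normSq_ofReal, mul_mul_mul_comm, Real.mul_self_sqrt hlam.1,
      Real.mul_self_sqrt hlam'.le]
    field_simp
  rw [PsiInv, LinearMap.sub_apply, LinearMap.smul_apply, sandwich_vecMulVec, sandwich_vecMulVec,
    Kmat_inv_mulVec_Kmat_mulVec hlam.2 hx, Lmat_mulVec_Kmat_mulVec lam hx,
    vecMulVec_smul_star_smul, smul_smul, ← Complex.ofReal_mul, hcoeff]

lemma IsCP.star_dotProduct_eq_zero_or_map_vecMulVec_apply_self_eq_zero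
    {Φ : Matrix (Fin n) (Fin n) ℂ →ₗ[ℂ] Matrix (Fin n) (Fin n) ℂ} {y w : Fin n → ℂ} {i : Fin n}
    (hcomp : IsCP (Φ ∘ₗ PsiInv lam x y)) (hΦ : IsCP Φ) (hlam : lam ∈ Set.Ioo (0 : ℝ) 1)
    (hx : star x ⬝ᵥ x = 1) (hw : Φ (vecMulVec w (star w)) i i = 0) :
    star x ⬝ᵥ w = 0 ∨ Φ (vecMulVec y (star y)) i i = 0 := by
  set q := Φ (vecMulVec y (star y)) i i
  set r := lam * Complex.normSq (star x ⬝ᵥ w) with hr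
  have hrq_nonneg : 0 ≤ (r : ℂ) * q :=
    mul_nonneg (Complex.zero_le_real.2 (mul_nonneg hlam.1.le (Complex.normSq_nonneg _)))
      (hΦ.map_vecMulVec_apply_self_nonneg y i)
  have hrq_nonpos : (r : ℂ) * q ≤ 0 := by
    have h := hcomp.map_vecMulVec_apply_self_nonneg (Kmat lam x *ᵥ w) i
    rwa [LinearMap.comp_apply, PsiInv_vecMulVec_Kmat_mulVec (Set.Ioo_subset_Ico_self hlam) hx,
      map_sub, map_smul, Matrix.sub_apply, Matrix.smul_apply, hw, zero_sub, neg_nonneg] at h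
  refine (mul_eq_zero.1 (hrq_nonpos.antisymm hrq_nonneg)).imp_left fun hr_zero => ?_
  rwa [hr, Complex.ofReal_eq_zero, mul_eq_zero_iff_left hlam.1.ne', Complex.normSq_eq_zero]
    at hr_zero

end PsiInv

theorem qutrit_prime_diagonal_general {n : ℕ}
    {Φ : Matrix (Fin n) (Fin n) ℂ →ₗ[ℂ] Matrix (Fin n) (Fin n) ℂ} (hΦ : IsCP Φ)
    (hker : ∀ i v, Φ (vecMulVec v (star v)) i i = 0 ↔ ∀ j ≠ i, v j = 0)
    {lam : ℝ} (hlam : lam ∈ Set.Ioo (0 : ℝ) 1) {x xp : Fin n → ℂ}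
    (hx : star x ⬝ᵥ x = 1) (hxp : xp ≠ 0) (hort : star x ⬝ᵥ xp = 0) :
    ¬ IsCP (Φ ∘ₗ PsiInv lam x xp) := by
  intro hcomp
  obtain ⟨i, hi⟩ : ∃ i, x i ≠ 0 := by
    by_contra! h
    simp [dotProduct, h] at hx
  have hei : Φ (vecMulVec (Pi.single i 1) (star (Pi.single i 1))) i i = 0 :=
    (hker i _).2 fun j hj => Pi.single_eq_of_ne hj 1
  have hxp_off : ∀ j ≠ i, xp j = 0 := by
    refine (hker i xp).1 <|
      (hcomp.star_dotProduct_eq_zero_or_map_vecMulVec_apply_self_eq_zero hΦ hlam hx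
        hei).resolve_left ?_
    simpa using hi
  have hxp_i : xp i = 0 := by
    rw [dotProduct, Fintype.sum_eq_single i fun j hj => by rw [hxp_off j hj, mul_zero]] at hort
    simpa [hi] using hort
  refine hxp (funext fun j => ?_)
  obtain rfl | hj := eq_or_ne j i
  exacts [hxp_i, hxp_off j hj]

/-- a qutrit channel whose Choi matrix has diagonal
`(0, a, 1-a, b, 0, 1-b, c, 1-c, 0)` with `a, b, c ∈ (0,1)` admits no division by any
`Ψ_{λ,x,x⊥}`. -/
theorem qutrit_prime_diagonal
    (Φ : Matrix (Fin 3) (Fin 3) ℂ →ₗ[ℂ] Matrix (Fin 3) (Fin 3) ℂ) (hΦ : IsChannel Φ)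
    (a b c : ℝ) (ha : a ∈ Set.Ioo (0 : ℝ) 1) (hb : b ∈ Set.Ioo (0 : ℝ) 1)
    (hc : c ∈ Set.Ioo (0 : ℝ) 1)
    (h00 : Φ (Matrix.single 0 0 (1 : ℂ)) 0 0 = 0)
    (h01 : Φ (Matrix.single 0 0 (1 : ℂ)) 1 1 = (a : ℂ))
    (h02 : Φ (Matrix.single 0 0 (1 : ℂ)) 2 2 = (1 - a : ℝ))
    (h10 : Φ (Matrix.single 1 1 (1 : ℂ)) 0 0 = (b : ℂ))
    (h11 : Φ (Matrix.single 1 1 (1 : ℂ)) 1 1 = 0)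
    (h12 : Φ (Matrix.single 1 1 (1 : ℂ)) 2 2 = (1 - b : ℝ))
    (h20 : Φ (Matrix.single 2 2 (1 : ℂ)) 0 0 = (c : ℂ))
    (h21 : Φ (Matrix.single 2 2 (1 : ℂ)) 1 1 = (1 - c : ℝ))
    (h22 : Φ (Matrix.single 2 2 (1 : ℂ)) 2 2 = 0) :
    ∀ lam ∈ Set.Ioo (0 : ℝ) 1, ∀ x xp : Fin 3 → ℂ,
      star x ⬝ᵥ x = 1 → star xp ⬝ᵥ xp = 1 → star x ⬝ᵥ xp = 0 →
      ¬ IsCP (Φ ∘ₗ PsiInv lam x xp) := by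
  intro lam hlam x xp hx hxp hort
  have hdiag : ∀ i j, Φ (single j j 1) i i = 0 ↔ j = i := by
    intro i j
    fin_cases i <;> fin_cases j <;>
      simp [*, -Complex.ofReal_sub, sub_eq_zero, ha.1.ne', hb.1.ne', hc.1.ne', ha.2.ne', hb.2.ne',
        hc.2.ne']
  exact qutrit_prime_diagonal_general hΦ.1 (hΦ.map_vecMulVec_apply_self_eq_zero_iff hdiag) hlam hx
    (by rintro rfl; simp at hxp) hort

end
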